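/- Let f : ℝ^{dx} → ℝ be convex and differentiable with Lx-Lipschitz gradient and g : ℝ^{dy} → ℝ be convex and differentiable with Ly-Lipschitz gradient, Lx, Ly > 0, and let B ∈ ℝ^{dy×dx}. Suppose x* ∈ ℝ^{dx}, y* ∈ ℝ^{dy} satisfy ∇f(x*) + Bᵀy* = 0 and ∇g(y*) = Bx*. Set βx := 1/(4Ly) and βy := 1/(4Lx). Then for all x, x_in ∈ ℝ^{dx} and y, y_in ∈ ℝ^{dy}: f(x) − f(x*) + g(y) − g(y*) + ⟨Bᵀy*, x − x*⟩ − ⟨Bx*, y − y*⟩ + (βx/2)(‖Bx − ∇g(y_in)‖² − ‖Bx* − ∇g(y_in)‖²) + (βy/2)(‖Bᵀy + ∇f(x_in)‖² − ‖Bᵀy* + ∇f(x_in)‖²) ≥ D_f(x, x*) + D_g(y, y*) + (βx/4)‖B(x − x*)‖² + (βy/4)‖Bᵀ(y − y*)‖² − (1/2)·D_f(x_in, x*) − (1/2)·D_g(y_in, y*). -/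

import Mathlib

open scoped RealInnerProductSpace Matrix

theorem aux_descent {E : Type*} [NormedAddCommGroup E] [InnerProductSpace ℝ E] [CompleteSpace E]
    (h : E → ℝ) (h' : E → E) (L : ℝ)
    (hd : ∀ x, HasGradientAt h (h' x) x)
    (hlip : ∀ x x', ‖h' x - h' x'‖ ≤ L * ‖x - x'‖) (y d : E) :
    h (y + d) ≤ h y + ⟪h' y, d⟫ + L / 2 * ‖d‖ ^ 2 := by
  have hder : ∀ t : ℝ, HasDerivAt
      (fun t : ℝ => h (y + t • d) - t * ⟪h' y, d⟫ - L / 2 * ‖d‖ ^ 2 * t ^ 2)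
      (⟪h' (y + t • d), d⟫ - 1 * ⟪h' y, d⟫ - L / 2 * ‖d‖ ^ 2 * (2 * t)) t := by
    intro t
    have h1 : HasDerivAt (fun t : ℝ => y + t • d) d t := by
      simpa using ((hasDerivAt_id t).smul_const d).const_add y
    have h2 : HasDerivAt (fun t : ℝ => h (y + t • d)) ⟪h' (y + t • d), d⟫ t := by
      have := (hd (y + t • d)).hasFDerivAt.comp_hasDerivAt t h1
      simp only [InnerProductSpace.toDual_apply_apply] at this
      exact this
    have h3 : HasDerivAt (fun t : ℝ => t ^ 2) (2 * t) t := by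
      simpa using hasDerivAt_pow 2 t
    exact (h2.sub ((hasDerivAt_id t).mul_const _)).sub (h3.const_mul _)
  have hanti := antitoneOn_of_deriv_nonpos (convex_Icc (0 : ℝ) 1)
    (fun t _ => (hder t).continuousAt.continuousWithinAt)
    (fun t _ => (hder t).differentiableAt.differentiableWithinAt)
    (fun t ht => by
      rw [(hder t).deriv]
      rw [interior_Icc] at ht
      have e1 : ⟪h' (y + t • d) - h' y, d⟫ ≤ ‖h' (y + t • d) - h' y‖ * ‖d‖ :=
        real_inner_le_norm _ _
      have e2 := hlip (y + t • d) y
      rw [add_sub_cancel_left, norm_smul, Real.norm_of_nonneg ht.1.le] at e2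
      have e3 := mul_le_mul_of_nonneg_right e2 (norm_nonneg d)
      rw [inner_sub_left] at e1
      nlinarith)
  have := hanti (Set.left_mem_Icc.2 zero_le_one) (Set.right_mem_Icc.2 zero_le_one) zero_le_one
  simp at this
  linarith

theorem aux_coco {E : Type*} [NormedAddCommGroup E] [InnerProductSpace ℝ E] [CompleteSpace E]
    (h : E → ℝ) (h' : E → E) (L : ℝ) (hL : 0 < L)
    (hconv : ∀ x x', 0 ≤ h x - h x' - ⟪h' x', x - x'⟫)
    (hd : ∀ x, HasGradientAt h (h' x) x)
    (hlip : ∀ x x', ‖h' x - h' x'‖ ≤ L * ‖x - x'‖) (y z : E) :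
    1 / (4 * L) * ‖h' y - h' z‖ ^ 2 ≤ 1 / 2 * (h y - h z - ⟪h' z, y - z⟫) := by
  have a := aux_descent h h' L hd hlip y (-(1 / L) • (h' y - h' z))
  have b := hconv (y + -(1 / L) • (h' y - h' z)) z
  rw [add_sub_right_comm, inner_add_right, inner_smul_right] at b
  rw [inner_smul_right, norm_smul, mul_pow, Real.norm_eq_abs, sq_abs] at a
  have c : ⟪h' y, h' y - h' z⟫ - ⟪h' z, h' y - h' z⟫ = ‖h' y - h' z‖ ^ 2 := by
    rw [← inner_sub_left, real_inner_self_eq_norm_sq]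
  have e : L / 2 * ((-(1 / L)) ^ 2 * ‖h' y - h' z‖ ^ 2) = 1 / (2 * L) * ‖h' y - h' z‖ ^ 2 := by
    field_simp
  have e2 : 1 / (4 * L) = 1 / L / 4 := by field_simp
  have e3 : 1 / (2 * L) = 1 / L / 2 := by field_simp
  rw [e, e3] at a
  rw [e2]
  have c2 := congrArg (fun s => 1 / L * s) c
  simp only [mul_sub] at c2
  linarith

theorem aux_quad {E : Type*} [NormedAddCommGroup E] [InnerProductSpace ℝ E]
    (u w : E) (β : ℝ) (hβ : 0 ≤ β) :
    β / 4 * ‖u‖ ^ 2 - β * ‖w‖ ^ 2 ≤ β / 2 * (‖u + w‖ ^ 2 - ‖w‖ ^ 2) := by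
  have h1 := norm_add_sq_real u w
  have h2 := norm_add_sq_real u ((2 : ℝ) • w)
  rw [inner_smul_right, norm_smul, Real.norm_of_nonneg zero_le_two] at h2
  have h3 := sq_nonneg ‖u + (2 : ℝ) • w‖
  have h4 : 0 ≤ ‖u‖ ^ 2 + 4 * ⟪u, w⟫ + 4 * ‖w‖ ^ 2 := by nlinarith
  rw [h1]
  nlinarith [mul_nonneg hβ h4]

/-- Key regularized gap inequality: at a saddle point `(x*, y*)` (i.e.
`∇f(x*) + Bᵀy* = 0`, `∇g(y*) = Bx*`), with `βx = 1/(4Ly)`, `βy = 1/(4Lx)`, the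
regularized primal-dual gap dominates the Bregman divergences plus quadratic
terms, up to half the Bregman divergences at the input point. -/
theorem regularized_gap_inequality (dx dy : ℕ)
    (f : EuclideanSpace ℝ (Fin dx) → ℝ)
    (f' : EuclideanSpace ℝ (Fin dx) → EuclideanSpace ℝ (Fin dx))
    (g : EuclideanSpace ℝ (Fin dy) → ℝ)
    (g' : EuclideanSpace ℝ (Fin dy) → EuclideanSpace ℝ (Fin dy))
    (B : Matrix (Fin dy) (Fin dx) ℝ) (Lx Ly : ℝ) (hLx : 0 < Lx) (hLy : 0 < Ly)
    (hfconv : ∀ x x', 0 ≤ f x - f x' - ⟪f' x', x - x'⟫)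
    (hfd : ∀ x, HasGradientAt f (f' x) x)
    (hflip : ∀ x x', ‖f' x - f' x'‖ ≤ Lx * ‖x - x'‖)
    (hgconv : ∀ y y', 0 ≤ g y - g y' - ⟪g' y', y - y'⟫)
    (hgd : ∀ y, HasGradientAt g (g' y) y)
    (hglip : ∀ y y', ‖g' y - g' y'‖ ≤ Ly * ‖y - y'‖)
    (xs : EuclideanSpace ℝ (Fin dx)) (ys : EuclideanSpace ℝ (Fin dy))
    (hopt1 : f' xs + Matrix.toEuclideanLin Bᵀ ys = 0)
    (hopt2 : g' ys = Matrix.toEuclideanLin B xs)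
    (βx βy : ℝ) (hβx : βx = 1 / (4 * Ly)) (hβy : βy = 1 / (4 * Lx)) :
    ∀ (x xin : EuclideanSpace ℝ (Fin dx)) (y yin : EuclideanSpace ℝ (Fin dy)),
      f x - f xs + (g y - g ys) +
          ⟪Matrix.toEuclideanLin Bᵀ ys, x - xs⟫ - ⟪Matrix.toEuclideanLin B xs, y - ys⟫ +
          βx / 2 * (‖Matrix.toEuclideanLin B x - g' yin‖ ^ 2 -
            ‖Matrix.toEuclideanLin B xs - g' yin‖ ^ 2) +
          βy / 2 * (‖Matrix.toEuclideanLin Bᵀ y + f' xin‖ ^ 2 -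
            ‖Matrix.toEuclideanLin Bᵀ ys + f' xin‖ ^ 2) ≥
        (f x - f xs - ⟪f' xs, x - xs⟫) + (g y - g ys - ⟪g' ys, y - ys⟫) +
          βx / 4 * ‖Matrix.toEuclideanLin B (x - xs)‖ ^ 2 +
          βy / 4 * ‖Matrix.toEuclideanLin Bᵀ (y - ys)‖ ^ 2 -
          1 / 2 * (f xin - f xs - ⟪f' xs, xin - xs⟫) -
          1 / 2 * (g yin - g ys - ⟪g' ys, yin - ys⟫) := by
  intro x xin y yin
  have hb1 : 0 ≤ βx := by rw [hβx]; positivity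
  have hb2 : 0 ≤ βy := by rw [hβy]; positivity
  have c1 := aux_coco f f' Lx hLx hfconv hfd hflip xin xs
  have c2 := aux_coco g g' Ly hLy hgconv hgd hglip yin ys
  rw [← hβy] at c1
  rw [← hβx] at c2
  have hB : Matrix.toEuclideanLin Bᵀ ys = -f' xs := by
    rw [eq_neg_iff_add_eq_zero, add_comm]; exact hopt1
  have q1 := aux_quad (Matrix.toEuclideanLin B (x - xs))
    (Matrix.toEuclideanLin B xs - g' yin) βx hb1
  have q2 := aux_quad (Matrix.toEuclideanLin Bᵀ (y - ys))
    (Matrix.toEuclideanLin Bᵀ ys + f' xin) βy hb2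
  have r1 : Matrix.toEuclideanLin B (x - xs) + (Matrix.toEuclideanLin B xs - g' yin)
      = Matrix.toEuclideanLin B x - g' yin := by rw [map_sub]; abel
  have r2 : Matrix.toEuclideanLin Bᵀ (y - ys) + (Matrix.toEuclideanLin Bᵀ ys + f' xin)
      = Matrix.toEuclideanLin Bᵀ y + f' xin := by rw [map_sub]; abel
  have n1 : ‖Matrix.toEuclideanLin B xs - g' yin‖ = ‖g' yin - g' ys‖ := by
    rw [hopt2, norm_sub_rev]
  have n2 : ‖Matrix.toEuclideanLin Bᵀ ys + f' xin‖ = ‖f' xin - f' xs‖ := by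
    rw [hB, neg_add_eq_sub]
  rw [r1, n1] at q1
  rw [r2, n2] at q2
  rw [n1, n2, hB, ← hopt2, inner_neg_left]
  linarith
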